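/- Boundedness of the average squared natural distance for all arrival probabilities: suppose g has a positive definite fixed point P∞ and there exist m ≥ 1 and a positive definite symmetric matrix W such that g applied m times maps every positive definite P ≥ P∞ to a matrix ≤ W (Löwner order). Then for every arrival probability γ̄ ∈ (0,1], the matrix Linear/Gaussian/Bernoulli process started at P(0) = P∞ satisfies sup_{k∈ℕ} E[d(P∞, P(k))²] < ∞, where d is the natural (Fisher/affine-invariant) distance. -/

import Mathlib

open Matrix

noncomputable def matEigs {n : ℕ} (M : Matrix (Fin n) (Fin n) ℝ) : Fin n → ℝ := by
  classical exact if h : M.IsHermitian then h.eigenvalues else 0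

noncomputable def Matrix.PosSemidef.sqrt {n : Type*} [Fintype n] [DecidableEq n]
    {A : Matrix n n ℝ} (hA : A.PosSemidef) : Matrix n n ℝ :=
  hA.1.eigenvectorUnitary.1 *
    diagonal ((RCLike.ofReal : ℝ → ℝ) ∘ Real.sqrt ∘ hA.1.eigenvalues) *
    (star hA.1.eigenvectorUnitary : Matrix n n ℝ)

noncomputable def matSqrt {n : ℕ} (M : Matrix (Fin n) (Fin n) ℝ) :
    Matrix (Fin n) (Fin n) ℝ := by
  classical exact if h : M.PosSemidef then h.sqrt else 0

/-- The natural (Fisher / affine-invariant) distance on positive definite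
matrices: `d(P₁,P₂) = (∑ᵢ (log λᵢ)²)^{1/2}` where `λᵢ` are the eigenvalues of
`P₂^{-1/2} P₁ P₂^{-1/2}`. -/
noncomputable def natDist {n : ℕ} (P₁ P₂ : Matrix (Fin n) (Fin n) ℝ) : ℝ :=
  Real.sqrt (∑ i : Fin n,
    Real.log (matEigs ((matSqrt P₂)⁻¹ * P₁ * (matSqrt P₂)⁻¹) i) ^ 2)

open MeasureTheory ProbabilityTheory

/-- Time-update Riccati map `h(P) = A P Aᵀ + Q`. -/
def riccatiH {n : ℕ} (A Q P : Matrix (Fin n) (Fin n) ℝ) :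
    Matrix (Fin n) (Fin n) ℝ := A * P * Aᵀ + Q

/-- Measurement-update Riccati map `g(P) = ((A P Aᵀ + Q)⁻¹ + 𝓘)⁻¹`. -/
noncomputable def riccatiG {n : ℕ} (A Q I P : Matrix (Fin n) (Fin n) ℝ) :
    Matrix (Fin n) (Fin n) ℝ := ((A * P * Aᵀ + Q)⁻¹ + I)⁻¹

/-- The matrix Linear/Gaussian/Bernoulli covariance process driven by the
arrival sequence `ω : ℕ → Bool`, started at `P₀`. -/
noncomputable def lgbMatProc {n : ℕ} (A Q I P₀ : Matrix (Fin n) (Fin n) ℝ)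
    (ω : ℕ → Bool) : ℕ → Matrix (Fin n) (Fin n) ℝ
  | 0 => P₀
  | k + 1 =>
      if ω k then riccatiG A Q I (lgbMatProc A Q I P₀ ω k)
      else riccatiH A Q (lgbMatProc A Q I P₀ ω k)


namespace LGB

variable {n : ℕ}


lemma psd_trans {X Y Z : Matrix (Fin n) (Fin n) ℝ} (h1 : (Y - X).PosSemidef)
    (h2 : (Z - Y).PosSemidef) : (Z - X).PosSemidef := by
  have := h1.add h2
  have e : Y - X + (Z - Y) = Z - X := by abel
  rwa [e] at this

lemma psd_conj {X : Matrix (Fin n) (Fin n) ℝ} (h : X.PosSemidef)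
    (B : Matrix (Fin n) (Fin n) ℝ) : (B * X * Bᵀ).PosSemidef := by
  have := h.mul_mul_conjTranspose_same B
  rwa [conjTranspose_eq_transpose_of_trivial] at this

lemma inv_anti {X Y : Matrix (Fin n) (Fin n) ℝ} (hX : X.PosDef) (hY : Y.PosDef)
    (h : (Y - X).PosSemidef) : (X⁻¹ - Y⁻¹).PosSemidef := by
  have uX : IsUnit X.det := (Matrix.isUnit_iff_isUnit_det _).1 hX.isUnit
  have uY : IsUnit Y.det := (Matrix.isUnit_iff_isUnit_det _).1 hY.isUnit
  have tY : (Y⁻¹)ᵀ = Y⁻¹ := by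
    have := hY.inv.1
    rwa [IsHermitian, conjTranspose_eq_transpose_of_trivial] at this
  have tD : (Y - X)ᵀ = Y - X := by
    have := h.1
    rwa [IsHermitian, conjTranspose_eq_transpose_of_trivial] at this
  have h1 := psd_conj h Y⁻¹
  have h2 := psd_conj hX.inv.posSemidef (Y⁻¹ * (Y - X))
  rw [transpose_mul, tY, tD] at h2
  rw [tY] at h1
  have := h1.add h2
  convert this using 1
  have e1 : Y⁻¹ * (Y - X) = 1 - Y⁻¹ * X := by
    rw [mul_sub, nonsing_inv_mul _ uY]
  have e2 : (Y - X) * Y⁻¹ = 1 - X * Y⁻¹ := by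
    rw [sub_mul, mul_nonsing_inv _ uY]
  rw [e1, e2]
  have e3 : (1 - Y⁻¹ * X) * X⁻¹ = X⁻¹ - Y⁻¹ := by
    rw [sub_mul, one_mul, mul_assoc, mul_nonsing_inv _ uX, mul_one]
  rw [e3]
  have e4 : X⁻¹ * (X * Y⁻¹) = Y⁻¹ := by
    rw [← mul_assoc, nonsing_inv_mul _ uX, one_mul]
  rw [mul_sub, mul_one, sub_mul X⁻¹ Y⁻¹ (X * Y⁻¹), e4, sub_mul, one_mul]
  noncomm_ring

lemma h_posDef {A Q P : Matrix (Fin n) (Fin n) ℝ} (hA : IsUnit A.det) (hQ : Q.PosSemidef)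
    (hP : P.PosDef) : (riccatiH A Q P).PosDef := by
  unfold riccatiH
  have hu : IsUnit A := (Matrix.isUnit_iff_isUnit_det _).2 hA
  have := (Matrix.IsUnit.posDef_star_right_conjugate_iff (x := P) hu).2 hP
  rw [star_eq_conjTranspose, conjTranspose_eq_transpose_of_trivial] at this
  exact this.add_posSemidef hQ

lemma g_eq (A Q I P : Matrix (Fin n) (Fin n) ℝ) :
    riccatiG A Q I P = ((riccatiH A Q P)⁻¹ + I)⁻¹ := rfl

lemma g_posDef {A Q I P : Matrix (Fin n) (Fin n) ℝ} (hA : IsUnit A.det) (hQ : Q.PosSemidef)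
    (hI : I.PosSemidef) (hP : P.PosDef) : (riccatiG A Q I P).PosDef := by
  rw [g_eq]
  exact ((h_posDef hA hQ hP).inv.add_posSemidef hI).inv

lemma g_le_h {A Q I P : Matrix (Fin n) (Fin n) ℝ} (hA : IsUnit A.det) (hQ : Q.PosSemidef)
    (hI : I.PosSemidef) (hP : P.PosDef) : (riccatiH A Q P - riccatiG A Q I P).PosSemidef := by
  rw [g_eq]
  have hh := h_posDef hA hQ hP
  have := inv_anti hh.inv (hh.inv.add_posSemidef hI) (by simpa using hI)
  rwa [nonsing_inv_nonsing_inv _ ((Matrix.isUnit_iff_isUnit_det _).1 hh.isUnit)] at this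

lemma h_mono {A Q X Y : Matrix (Fin n) (Fin n) ℝ} 
    (h : (Y - X).PosSemidef) : (riccatiH A Q Y - riccatiH A Q X).PosSemidef := by
  have := psd_conj h A
  convert this using 1
  unfold riccatiH
  noncomm_ring

lemma g_mono {A Q I X Y : Matrix (Fin n) (Fin n) ℝ} (hA : IsUnit A.det) (hQ : Q.PosSemidef)
    (hI : I.PosSemidef) (hX : X.PosDef) (hY : Y.PosDef)
    (h : (Y - X).PosSemidef) : (riccatiG A Q I Y - riccatiG A Q I X).PosSemidef := by
  rw [g_eq, g_eq]
  have h1 := h_posDef hA hQ hX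
  have h2 := h_posDef hA hQ hY
  apply inv_anti (h2.inv.add_posSemidef hI) (h1.inv.add_posSemidef hI)
  simpa using inv_anti h1 h2 (h_mono h)

lemma h_scale {A Q P P0 : Matrix (Fin n) (Fin n) ℝ} (hQ : Q.PosSemidef) {t : ℝ} (ht : 1 ≤ t)
    (h : (t • P0 - P).PosSemidef) : (t • riccatiH A Q P0 - riccatiH A Q P).PosSemidef := by
  have h1 := (psd_conj h A).add (hQ.smul (sub_nonneg.2 ht))
  convert h1 using 1
  unfold riccatiH
  simp only [mul_sub, sub_mul, smul_add, sub_smul, one_smul, Matrix.mul_smul, Matrix.smul_mul]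
  abel

lemma sqrt_facts {P : Matrix (Fin n) (Fin n) ℝ} (hP : P.PosDef) :
    (matSqrt P)ᵀ = matSqrt P ∧ matSqrt P * matSqrt P = P ∧ IsUnit (matSqrt P).det := by
  have hS : matSqrt P = hP.posSemidef.sqrt := by
    unfold matSqrt; rw [dif_pos hP.posSemidef]
  have hsq : matSqrt P * matSqrt P = P := by
    rw [hS]
    unfold Matrix.PosSemidef.sqrt
    conv_rhs => rw [hP.1.spectral_theorem, Unitary.conjStarAlgAut_apply]
    set U := hP.1.eigenvectorUnitary
    have hU : (star U : Matrix (Fin n) (Fin n) ℝ) * U.1 = 1 := Unitary.coe_star_mul_self U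
    have : ∀ D : Matrix (Fin n) (Fin n) ℝ, U.1 * D * (star U : Matrix (Fin n) (Fin n) ℝ) *
      (U.1 * D * (star U : Matrix (Fin n) (Fin n) ℝ)) = U.1 * (D * D) * (star U : Matrix (Fin n) (Fin n) ℝ) := by
      intro D
      calc _ = U.1 * D * ((star U : Matrix (Fin n) (Fin n) ℝ) * U.1) * D * (star U : Matrix (Fin n) (Fin n) ℝ) := by
            simp only [mul_assoc]
        _ = _ := by rw [hU, mul_one]; simp only [mul_assoc]
    rw [this, diagonal_mul_diagonal]
    congr 3
    ext i
    simp [Real.mul_self_sqrt (hP.eigenvalues_pos i).le]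
  refine ⟨?_, hsq, ?_⟩
  · rw [hS]
    unfold Matrix.PosSemidef.sqrt
    rw [transpose_mul, transpose_mul, diagonal_transpose, mul_assoc]
    congr 1
  · have := (Matrix.isUnit_iff_isUnit_det _).1 hP.isUnit
    rw [← hsq, det_mul] at this
    exact isUnit_of_mul_isUnit_left this

lemma eig_le {M : Matrix (Fin n) (Fin n) ℝ} (hM : M.IsHermitian) {c : ℝ}
    (h : (c • (1 : Matrix (Fin n) (Fin n) ℝ) - M).PosSemidef) (i : Fin n) :
    hM.eigenvalues i ≤ c := by
  have h1 := h.dotProduct_mulVec_nonneg (hM.eigenvectorBasis i)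
  have h2 := hM.eigenvalues_eq i
  have h3 : star ⇑(hM.eigenvectorBasis i) ⬝ᵥ ⇑(hM.eigenvectorBasis i) = (1 : ℝ) := by
    rw [dotProduct_comm, ← EuclideanSpace.inner_eq_star_dotProduct, inner_self_eq_norm_sq_to_K,
      hM.eigenvectorBasis.orthonormal.1 i]
    simp
  rw [sub_mulVec, dotProduct_sub, smul_mulVec, one_mulVec, dotProduct_smul, h3] at h1
  simp at h1 h2
  linarith

lemma le_eig {M : Matrix (Fin n) (Fin n) ℝ} (hM : M.IsHermitian) {c : ℝ}
    (h : (M - c • (1 : Matrix (Fin n) (Fin n) ℝ)).PosSemidef) (i : Fin n) :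
    c ≤ hM.eigenvalues i := by
  have h1 := h.dotProduct_mulVec_nonneg (hM.eigenvectorBasis i)
  have h2 := hM.eigenvalues_eq i
  have h3 : star ⇑(hM.eigenvectorBasis i) ⬝ᵥ ⇑(hM.eigenvectorBasis i) = (1 : ℝ) := by
    rw [dotProduct_comm, ← EuclideanSpace.inner_eq_star_dotProduct, inner_self_eq_norm_sq_to_K,
      hM.eigenvectorBasis.orthonormal.1 i]
    simp
  rw [sub_mulVec, dotProduct_sub, smul_mulVec, one_mulVec, dotProduct_smul, h3] at h1
  simp at h1 h2
  linarith

lemma exists_le_one {M : Matrix (Fin n) (Fin n) ℝ} (hM : M.PosSemidef) :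
    ∃ c : ℝ, 1 ≤ c ∧ (c • (1 : Matrix (Fin n) (Fin n) ℝ) - M).PosSemidef := by
  refine ⟨1 + ∑ i, hM.1.eigenvalues i, ?_, ?_⟩
  · have := Finset.sum_nonneg (fun i (_ : i ∈ Finset.univ) => hM.eigenvalues_nonneg i)
    linarith
  set c := 1 + ∑ i, hM.1.eigenvalues i
  have hc : ∀ i, hM.1.eigenvalues i ≤ c := fun i => by
    have := Finset.single_le_sum (fun i (_ : i ∈ Finset.univ) => hM.eigenvalues_nonneg i)
      (Finset.mem_univ i)
    simp only [c]; linarith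
  have hd : (diagonal (fun i => c - hM.1.eigenvalues i)).PosSemidef :=
    PosSemidef.diagonal (fun i => sub_nonneg.2 (hc i))
  have := hd.mul_mul_conjTranspose_same hM.1.eigenvectorUnitary.1
  convert this using 1
  conv_lhs => rw [hM.1.spectral_theorem, Unitary.conjStarAlgAut_apply]
  have e : (diagonal (fun i => c - hM.1.eigenvalues i)) =
    c • (1 : Matrix (Fin n) (Fin n) ℝ) - diagonal (RCLike.ofReal ∘ hM.1.eigenvalues) := by
    rw [smul_one_eq_diagonal, diagonal_sub]; rfl
  have hU := Unitary.coe_mul_star_self hM.1.eigenvectorUnitary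
  rw [Unitary.coe_star] at hU
  rw [e, mul_sub, sub_mul, Matrix.mul_smul, Matrix.smul_mul, mul_one, ← star_eq_conjTranspose, hU]

lemma exists_scale {P0 W : Matrix (Fin n) (Fin n) ℝ} (hP : P0.PosDef) (hW : W.PosSemidef) :
    ∃ c : ℝ, 1 ≤ c ∧ (c • P0 - W).PosSemidef := by
  obtain ⟨ht, hs, hu⟩ := sqrt_facts hP
  set S := matSqrt P0
  have hti : (S⁻¹)ᵀ = S⁻¹ := by rw [transpose_nonsing_inv, ht]
  obtain ⟨c, hc, h⟩ := exists_le_one (psd_conj hW S⁻¹)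
  refine ⟨c, hc, ?_⟩
  have := psd_conj h S
  convert this using 1
  rw [ht, hti, mul_sub, sub_mul, Matrix.mul_smul, Matrix.smul_mul, mul_one, hs]
  congr 1
  calc W = (S * S⁻¹) * W * (S⁻¹ * S) := by
        rw [mul_nonsing_inv _ hu, nonsing_inv_mul _ hu, one_mul, mul_one]
    _ = _ := by simp only [mul_assoc]

lemma natDist_bound {P0 P : Matrix (Fin n) (Fin n) ℝ} (hP0 : P0.PosDef) (hP : P.PosDef) {s : ℝ}
    (hs : 1 ≤ s) (hlo : (P - P0).PosSemidef) (hhi : (s • P0 - P).PosSemidef) :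
    natDist P0 P ^ 2 ≤ n * Real.log s ^ 2 := by
  obtain ⟨ht, hsq, hu⟩ := sqrt_facts hP
  unfold natDist
  rw [Real.sq_sqrt (Finset.sum_nonneg fun i _ => sq_nonneg _)]
  set S := matSqrt P
  have hs0 : 0 < s := by linarith
  have hti : (S⁻¹)ᵀ = S⁻¹ := by rw [transpose_nonsing_inv, ht]
  have hone : S⁻¹ * P * S⁻¹ = 1 := by
    rw [← hsq, ← mul_assoc, nonsing_inv_mul _ hu, one_mul, mul_nonsing_inv _ hu]
  have hM : (S⁻¹ * P0 * S⁻¹).IsHermitian := by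
    have := (psd_conj hP0.posSemidef S⁻¹).1
    rwa [hti] at this
  have h1 : ((1:ℝ) • (1 : Matrix (Fin n) (Fin n) ℝ) - S⁻¹ * P0 * S⁻¹).PosSemidef := by
    have := psd_conj hlo S⁻¹
    rw [hti, mul_sub, sub_mul, hone] at this
    rwa [one_smul]
  have h2 : (S⁻¹ * P0 * S⁻¹ - s⁻¹ • (1 : Matrix (Fin n) (Fin n) ℝ)).PosSemidef := by
    have := (psd_conj hhi S⁻¹).smul (inv_nonneg.2 hs0.le)
    rw [hti, mul_sub, sub_mul, hone, smul_sub, Matrix.mul_smul, Matrix.smul_mul, smul_smul,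
      inv_mul_cancel₀ hs0.ne', one_smul] at this
    exact this
  have hE : matEigs (S⁻¹ * P0 * S⁻¹) = hM.eigenvalues := by
    unfold matEigs; rw [dif_pos hM]
  rw [hE]
  have hb : ∀ i, Real.log (hM.eigenvalues i) ^ 2 ≤ Real.log s ^ 2 := by
    intro i
    have a1 := eig_le hM h1 i
    have a2 := le_eig hM h2 i
    have a3 : 0 < hM.eigenvalues i := lt_of_lt_of_le (inv_pos.2 hs0) a2
    have b1 := Real.log_nonpos a3.le a1
    have b2 := Real.log_le_log (inv_pos.2 hs0) a2
    rw [Real.log_inv] at b2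
    nlinarith
  calc _ ≤ ∑ i : Fin n, Real.log s ^ 2 := Finset.sum_le_sum fun i _ => hb i
    _ = _ := by simp

lemma proc_pos {A Q I P0 : Matrix (Fin n) (Fin n) ℝ} (hA : IsUnit A.det) (hQ : Q.PosSemidef)
    (hI : I.PosSemidef) (hP : P0.PosDef) (hfix : riccatiG A Q I P0 = P0) (ω : ℕ → Bool) (k : ℕ) :
    (lgbMatProc A Q I P0 ω k).PosDef ∧ (lgbMatProc A Q I P0 ω k - P0).PosSemidef := by
  induction k with
  | zero => exact ⟨hP, by simpa [lgbMatProc] using PosSemidef.zero⟩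
  | succ k ih =>
    obtain ⟨h1, h2⟩ := ih
    have h3 := g_mono hA hQ hI hP h1 h2
    rw [hfix] at h3
    unfold lgbMatProc
    split_ifs
    · exact ⟨g_posDef hA hQ hI h1, h3⟩
    · exact ⟨h_posDef hA hQ h1, psd_trans h3 (g_le_h hA hQ hI h1)⟩

lemma smul_le_smul' {P0 X : Matrix (Fin n) (Fin n) ℝ} {a t : ℝ} (ht : 0 ≤ t)
    (h : (a • P0 - X).PosSemidef) : ((t * a) • P0 - t • X).PosSemidef := by
  have := h.smul ht
  rwa [smul_sub, smul_smul] at this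

lemma proc_grow {A Q I P0 : Matrix (Fin n) (Fin n) ℝ} (hA : IsUnit A.det) (hQ : Q.PosSemidef)
    (hI : I.PosSemidef) (hP : P0.PosDef) (hfix : riccatiG A Q I P0 = P0) (ω : ℕ → Bool)
    {a s : ℝ} (ha : 1 ≤ a) (hs : 1 ≤ s) (haP : (a • P0 - riccatiH A Q P0).PosSemidef) (k : ℕ)
    (h : (s • P0 - lgbMatProc A Q I P0 ω k).PosSemidef) (j : ℕ) :
    ((s * a ^ j) • P0 - lgbMatProc A Q I P0 ω (k + j)).PosSemidef := by
  induction j with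
  | zero => simpa using h
  | succ j ih =>
    have h1 := (proc_pos hA hQ hI hP hfix ω (k + j)).1
    have hsa : 1 ≤ s * a ^ j := one_le_mul_of_one_le_of_one_le hs (one_le_pow₀ ha)
    have h2 := h_scale (A := A) hQ hsa ih
    have h3 := psd_trans h2 (smul_le_smul' (by linarith) haP)
    rw [pow_succ, ← mul_assoc, ← add_assoc]
    unfold lgbMatProc
    split_ifs
    · exact psd_trans (g_le_h hA hQ hI h1) h3
    · exact h3

lemma proc_run {A Q I P0 : Matrix (Fin n) (Fin n) ℝ} (ω : ℕ → Bool) (k m : ℕ)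
    (h : ∀ t < m, ω (k + t) = true) :
    lgbMatProc A Q I P0 ω (k + m) = (riccatiG A Q I)^[m] (lgbMatProc A Q I P0 ω k) := by
  induction m with
  | zero => rfl
  | succ m ih =>
    rw [Function.iterate_succ_apply', ← ih (fun t ht => h t (by omega)), ← add_assoc]
    rw [lgbMatProc, if_pos (h m (by omega))]

/-- The last `j` length-`m` blocks before `k` all fail. -/
def Bad (m k j : ℕ) : Set (ℕ → Bool) :=
  {ω | ∀ i < j, ∃ t < m, ω (k - (i + 1) * m + t) = false}

lemma det_bound {A Q I P0 W : Matrix (Fin n) (Fin n) ℝ} (hA : IsUnit A.det) (hQ : Q.PosSemidef)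
    (hI : I.PosSemidef) (hP : P0.PosDef) (hfix : riccatiG A Q I P0 = P0) (ω : ℕ → Bool)
    {a w : ℝ} (ha : 1 ≤ a) (hw : 1 ≤ w) (haP : (a • P0 - riccatiH A Q P0).PosSemidef)
    (hwP : (w • P0 - W).PosSemidef) (m : ℕ) (hm : 1 ≤ m)
    (hbound : ∀ P : Matrix (Fin n) (Fin n) ℝ, P.PosDef → (P - P0).PosSemidef →
      (W - (riccatiG A Q I)^[m] P).PosSemidef) (k : ℕ) :
    ∃ j, j * m ≤ k ∧ ω ∈ Bad m k j ∧
      natDist P0 (lgbMatProc A Q I P0 ω k) ^ 2 ≤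
        n * (Real.log w + m * Real.log a) ^ 2 * ((j : ℝ) + 1) ^ 2 := by
  classical
  have hla := Real.log_nonneg ha
  have hlw := Real.log_nonneg hw
  -- conversion from a scale bound
  have key : ∀ (j e : ℕ) , e ≤ (j + 1) * m → 
      ((w * a ^ e) • P0 - lgbMatProc A Q I P0 ω k).PosSemidef →
      natDist P0 (lgbMatProc A Q I P0 ω k) ^ 2 ≤
        n * (Real.log w + m * Real.log a) ^ 2 * ((j : ℝ) + 1) ^ 2 := by
    intro j e he h
    have hp := proc_pos hA hQ hI hP hfix ω k
    have := natDist_bound hP hp.1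
      (one_le_mul_of_one_le_of_one_le hw (one_le_pow₀ ha (n := e))) hp.2 h
    refine this.trans ?_
    rw [mul_assoc, ← mul_pow, Real.log_mul (by positivity) (by positivity), Real.log_pow]
    have he' : (e : ℝ) ≤ (j + 1) * m := by exact_mod_cast he
    have h0 : (e : ℝ) * Real.log a ≤ (j + 1) * m * Real.log a :=
      mul_le_mul_of_nonneg_right he' hla
    have h1 : Real.log w + e * Real.log a ≤ (Real.log w + m * Real.log a) * (j + 1) := by
      have : 0 ≤ (j:ℝ) * Real.log w := by positivity
      nlinarith
    gcongr
  set p : ℕ → Prop := fun j => j * m ≤ k ∧ ω ∈ Bad m k j with hpdef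
  have hp0 : p 0 := ⟨by simp, by intro i hi; omega⟩
  set J := Nat.findGreatest p k with hJ
  have hpJ : p J := Nat.findGreatest_spec (Nat.zero_le k) hp0
  refine ⟨J, hpJ.1, hpJ.2, ?_⟩
  by_cases hc : (J + 1) * m ≤ k
  · have hJk : J + 1 ≤ k := le_trans (Nat.le_mul_of_pos_right _ hm) hc
    have hn : ¬ p (J + 1) := Nat.findGreatest_is_greatest (Nat.lt_succ_self J) hJk
    have hrun : ∀ t < m, ω (k - (J + 1) * m + t) = true := by
      by_contra hcon
      push Not at hcon
      obtain ⟨t, ht, hω⟩ := hcon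
      apply hn
      refine ⟨hc, fun i hi => ?_⟩
      rcases Nat.lt_succ_iff_lt_or_eq.1 hi with h | h
      · exact hpJ.2 i h
      · subst h
        exact ⟨t, ht, by simpa using hω⟩
    have h1 := proc_run (A := A) (Q := Q) (I := I) (P0 := P0) ω _ m hrun
    have hp := proc_pos hA hQ hI hP hfix ω (k - (J + 1) * m)
    have h2 := hbound _ hp.1 hp.2
    rw [← h1] at h2
    have h3 := proc_grow hA hQ hI hP hfix ω ha hw haP _ (psd_trans h2 hwP) (J * m)
    have e : k - (J + 1) * m + m + J * m = k := by
      rw [add_mul] at hc ⊢; omega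
    rw [e] at h3
    exact key J (J * m) (Nat.mul_le_mul_right _ (by omega)) h3
  · have h0 : (w • P0 - lgbMatProc A Q I P0 ω 0).PosSemidef := by
      have := hP.posSemidef.smul (sub_nonneg.2 hw)
      rw [sub_smul, one_smul] at this
      exact this
    have h3 := proc_grow hA hQ hI hP hfix ω ha hw haP 0 h0 k
    rw [zero_add] at h3
    exact key J k (by omega) h3

lemma measurableSet_dep (S : Finset ℕ) (T : Set (S → Bool)) :
    MeasurableSet ((fun (ω : ℕ → Bool) (i : S) => ω i) ⁻¹' T) := by
  have hT : MeasurableSet T := T.toFinite.measurableSet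
  exact (measurable_pi_lambda _ fun i => measurable_pi_apply _) hT

lemma bad_eq (m k j : ℕ) (h : j * m ≤ k) :
    ∃ T : Set (Finset.Ico (k - j * m) k → Bool),
      Bad m k j = (fun (ω : ℕ → Bool) (i : Finset.Ico (k - j * m) k) => ω i) ⁻¹' T := by
  refine ⟨{f | ∀ i < j, ∃ t < m, ∃ (h : k - (i + 1) * m + t ∈ Finset.Ico (k - j * m) k),
    f ⟨_, h⟩ = false}, ?_⟩
  ext ω
  simp only [Bad, Set.mem_ofPred_eq, Set.mem_preimage]
  refine forall₂_congr fun i hi => ?_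
  refine exists_congr fun t => and_congr_right fun ht => ?_
  have h1 : (i + 1) * m ≤ j * m := Nat.mul_le_mul_right _ (by omega)
  have h2 : (i + 1) * m = i * m + m := by ring
  have : k - (i + 1) * m + t ∈ Finset.Ico (k - j * m) k := by
    rw [Finset.mem_Ico]; omega
  simp [this]

lemma measurableSet_bad (m k j : ℕ) (h : j * m ≤ k) : MeasurableSet (Bad m k j) := by
  obtain ⟨T, hT⟩ := bad_eq m k j h
  rw [hT]; exact measurableSet_dep _ _

lemma measure_bad (γ : ℝ) (hγ : γ ∈ Set.Ioc (0 : ℝ) 1)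
    (μ : Measure (ℕ → Bool)) [IsProbabilityMeasure μ]
    (hBern : ∀ k : ℕ, μ {ω : ℕ → Bool | ω k = true} = ENNReal.ofReal γ)
    (hIndep : iIndepFun (fun (k : ℕ) (ω : ℕ → Bool) => ω k) μ) (m k j : ℕ) (h : j * m ≤ k) :
    μ (Bad m k j) ≤ ENNReal.ofReal ((1 - γ ^ m) ^ j) := by
  have hq : 0 ≤ 1 - γ ^ m := sub_nonneg.2 (pow_le_one₀ hγ.1.le hγ.2)
  induction j with
  | zero => simpa using prob_le_one
  | succ j ih =>
    have hj : j * m ≤ k := le_trans (Nat.mul_le_mul_right _ (by omega)) h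
    have hjm : (j + 1) * m = j * m + m := by ring
    specialize ih hj
    obtain ⟨S, hS, T, hT⟩ : ∃ S : Finset ℕ, S = Finset.Ico (k - j * m) k ∧ ∃ T : Set (S → Bool),
        Bad m k j = (fun (ω : ℕ → Bool) (i : S) => ω i) ⁻¹' T := ⟨_, rfl, bad_eq m k j hj⟩
    set S' := Finset.Ico (k - (j + 1) * m) (k - j * m) with hS'
    set U : Set (S' → Bool) := {f | ∀ i, f i = true} with hU
    have hsplit : Bad m k (j + 1) = ((fun (ω : ℕ → Bool) (i : S) => ω i) ⁻¹' T) ∩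
        ((fun (ω : ℕ → Bool) (i : S') => ω i) ⁻¹' Uᶜ) := by
      rw [← hT]
      ext ω
      simp only [Bad, Set.mem_ofPred_eq, Set.mem_inter_iff, Set.mem_preimage, Set.mem_compl_iff, hU,
        not_forall]
      rw [Nat.forall_lt_succ_right]
      refine and_congr_right fun _ => ?_
      constructor
      · rintro ⟨t, ht, h⟩
        exact ⟨⟨k - (j + 1) * m + t, by rw [hS', Finset.mem_Ico]; omega⟩, by simpa using h⟩
      · rintro ⟨⟨i, hi⟩, h⟩
        rw [hS', Finset.mem_Ico] at hi
        refine ⟨i - (k - (j + 1) * m), by omega, ?_⟩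
        rw [Nat.add_sub_cancel' hi.1]
        simpa using h
    have hdis : Disjoint S S' := by
      rw [Finset.disjoint_left]
      intro x hx hx'
      simp only [hS, S', Finset.mem_Ico] at hx hx'
      omega
    have hind := hIndep.indepFun_finset S S' hdis (fun i => measurable_pi_apply i)
    have hmul := hind.measure_inter_preimage_eq_mul T Uᶜ T.toFinite.measurableSet
      Uᶜ.toFinite.measurableSet
    have hU' : μ ((fun (ω : ℕ → Bool) (i : S') => ω i) ⁻¹' U) = ENNReal.ofReal (γ ^ m) := by
      have := hIndep.measure_inter_preimage_eq_mul S' (sets := fun _ => {true})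
        (fun i _ => MeasurableSet.singleton _)
      have e1 : (⋂ i ∈ S', (fun ω : ℕ → Bool => ω i) ⁻¹' {true}) =
          (fun (ω : ℕ → Bool) (i : S') => ω i) ⁻¹' U := by
        ext ω; simp [hU]
      rw [e1] at this
      have hB : ∀ i : ℕ, μ ((fun ω : ℕ → Bool => ω i) ⁻¹' {true}) = ENNReal.ofReal γ := hBern
      rw [this, Finset.prod_congr rfl (fun i _ => hB i), Finset.prod_const, Nat.card_Ico,
        ENNReal.ofReal_pow hγ.1.le]
      congr 1
      omega
    rw [hsplit, hmul, ← hT, Set.preimage_compl, prob_compl_eq_one_sub (measurableSet_dep _ _), hU',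
      pow_succ, ENNReal.ofReal_mul (pow_nonneg hq _), ENNReal.ofReal_sub _ (pow_nonneg hγ.1.le _),
      ENNReal.ofReal_one]
    gcongr

end LGB

/-- If `g` has a positive definite fixed point `P∞` and some
iterate `g^{∘m}` (`m ≥ 1`) maps every positive definite `P ≥ P∞` below a fixed
positive definite `W` (Löwner order), then for every arrival probability
`γ̄ ∈ (0,1]` the matrix LGB process started at `P∞` has uniformly bounded
average squared natural distance: `sup_k E[d(P∞,P(k))²] < ∞`. -/
theorem lgb_average_sq_natDist_bounded
    {n : ℕ} (hn : 1 ≤ n) (A Q I Pinf W : Matrix (Fin n) (Fin n) ℝ)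
    (hA : IsUnit A.det) (hQ : Q.PosSemidef) (hI : I.PosSemidef)
    (hPinf : Pinf.PosDef) (hfix : riccatiG A Q I Pinf = Pinf)
    (m : ℕ) (hm : 1 ≤ m) (hW : W.PosDef)
    (hbound : ∀ P : Matrix (Fin n) (Fin n) ℝ, P.PosDef → (P - Pinf).PosSemidef →
      (W - (riccatiG A Q I)^[m] P).PosSemidef)
    (γ : ℝ) (hγ : γ ∈ Set.Ioc (0 : ℝ) 1)
    (μ : Measure (ℕ → Bool)) [IsProbabilityMeasure μ]
    (hBern : ∀ k : ℕ, μ {ω : ℕ → Bool | ω k = true} = ENNReal.ofReal γ)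
    (hIndep : iIndepFun
      (fun (k : ℕ) (ω : ℕ → Bool) => ω k) μ) :
    ∃ C : ℝ, ∀ k : ℕ,
      ∫⁻ ω, ENNReal.ofReal (natDist Pinf (lgbMatProc A Q I Pinf ω k) ^ 2) ∂μ
        ≤ ENNReal.ofReal C := by

  obtain ⟨a, ha, haP⟩ := LGB.exists_scale hPinf (LGB.h_posDef hA hQ hPinf).posSemidef
  obtain ⟨w, hw, hwP⟩ := LGB.exists_scale hPinf hW.posSemidef
  set K : ℝ := n * (Real.log w + m * Real.log a) ^ 2 with hK
  have hK0 : 0 ≤ K := by positivity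
  set q : ℝ := 1 - γ ^ m with hqdef
  have hq : 0 ≤ q := sub_nonneg.2 (pow_le_one₀ hγ.1.le hγ.2)
  have hq1 : q < 1 := by have := pow_pos hγ.1 m; linarith
  have hsum : Summable (fun j : ℕ => K * ((j : ℝ) + 1) ^ 2 * q ^ j) := by
    have hn : ‖q‖ < 1 := by rwa [Real.norm_of_nonneg hq]
    have s2 := summable_pow_mul_geometric_of_norm_lt_one 2 hn
    have s1 := summable_pow_mul_geometric_of_norm_lt_one 1 hn
    have s0 := summable_pow_mul_geometric_of_norm_lt_one 0 hn
    refine (((s2.add (s1.mul_left 2)).add s0).mul_left K).congr fun j => ?_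
    ring
  refine ⟨∑' j : ℕ, K * ((j : ℝ) + 1) ^ 2 * q ^ j, fun k => ?_⟩
  set F := (Finset.range (k + 1)).filter (fun j => j * m ≤ k) with hF
  have hmeas : ∀ j ∈ F, MeasurableSet (LGB.Bad m k j) := fun j hj =>
    LGB.measurableSet_bad m k j (Finset.mem_filter.1 hj).2
  calc ∫⁻ ω, ENNReal.ofReal (natDist Pinf (lgbMatProc A Q I Pinf ω k) ^ 2) ∂μ
      ≤ ∫⁻ ω, ∑ j ∈ F, (LGB.Bad m k j).indicator
          (fun _ => ENNReal.ofReal (K * ((j : ℝ) + 1) ^ 2)) ω ∂μ := by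
        refine lintegral_mono fun ω => ?_
        obtain ⟨j, hj, hb, hd⟩ := LGB.det_bound hA hQ hI hPinf hfix ω ha hw haP hwP m hm hbound k
        have hjF : j ∈ F := by
          rw [hF, Finset.mem_filter, Finset.mem_range]
          have := Nat.le_mul_of_pos_right j hm
          exact ⟨by omega, hj⟩
        refine le_trans ?_ (Finset.single_le_sum (fun _ _ => zero_le) hjF)
        rw [Set.indicator_of_mem hb]
        exact ENNReal.ofReal_le_ofReal hd
    _ = ∑ j ∈ F, ENNReal.ofReal (K * ((j : ℝ) + 1) ^ 2) * μ (LGB.Bad m k j) := by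
        rw [lintegral_finsetSum' _ (fun j hj => (measurable_const.indicator (hmeas j hj)).aemeasurable)]
        refine Finset.sum_congr rfl fun j hj => ?_
        rw [lintegral_indicator (hmeas j hj), setLIntegral_const]
    _ ≤ ∑ j ∈ F, ENNReal.ofReal (K * ((j : ℝ) + 1) ^ 2 * q ^ j) := by
        refine Finset.sum_le_sum fun j hj => ?_
        rw [ENNReal.ofReal_mul (p := K * ((j : ℝ) + 1) ^ 2) (by positivity)]
        gcongr
        exact LGB.measure_bad γ hγ μ hBern hIndep m k j (Finset.mem_filter.1 hj).2
    _ = ENNReal.ofReal (∑ j ∈ F, K * ((j : ℝ) + 1) ^ 2 * q ^ j) := by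
        rw [ENNReal.ofReal_sum_of_nonneg fun j _ => by positivity]
    _ ≤ _ := ENNReal.ofReal_le_ofReal (hsum.sum_le_tsum _ fun j _ => by positivity)
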